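/- arXiv:1812.07232 — 2 statements merged into one kernel-verified Lean document; each statement's English description precedes it below -/
import Mathlib

section
/- For all s ∈ ℝ with |s| > 1, one has |f(s)| ≥ f(1) · |s|^{1/2}. -/
/-!
Along the equation `f' = ϑ(f)^{-1/2}` one has `(f²)' = 2 f / √(ϑ(f))`, and the antitonicity of
`ϑ(t) / t²` says exactly that `t / √(ϑ(t))` increases on `(0, ∞)`. As `f` increases, `f²` is convex
on `[0, ∞)`; it vanishes at `0`, so its secant slopes `f(s)² / s` from the origin increase. Hence
`f(s) / √s` increases, and oddness transfers the bound to negative `s`.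
-/

open Set

theorem monotoneOn_div_sqrt_of_antitoneOn_div_sq {ϑ : ℝ → ℝ} {S : Set ℝ} (hS : S ⊆ Ioi 0)
    (hpos : ∀ t ∈ S, 0 < ϑ t) (hϑ : AntitoneOn (fun t => ϑ t / t ^ 2) S) :
    MonotoneOn (fun t => t / √(ϑ t)) S := by
  have sqrt_inv_eq : ∀ t ∈ S, √((ϑ t / t ^ 2)⁻¹) = t / √(ϑ t) := fun t ht => by
    rw [inv_div, Real.sqrt_div (sq_nonneg t), Real.sqrt_sq (hS ht).le]
  intro a ha b hb hab
  have hb_pos : 0 < ϑ b / b ^ 2 := div_pos (hpos b hb) (pow_pos (hS hb) 2)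
  simpa only [sqrt_inv_eq a ha, sqrt_inv_eq b hb] using
    Real.sqrt_le_sqrt (inv_anti₀ hb_pos (hϑ ha hb hab))

theorem convexOn_sq_of_monotoneOn_mul_deriv {f f' : ℝ → ℝ} {D : Set ℝ} (hD : Convex ℝ D)
    (hf : ContinuousOn f D) (hf' : ∀ x ∈ interior D, HasDerivAt f (f' x) x)
    (hmono : MonotoneOn (fun x => f x * f' x) (interior D)) :
    ConvexOn ℝ D (fun x => f x ^ 2) := by
  have hsq : ∀ x ∈ interior D, HasDerivAt (fun x => f x ^ 2) (2 * (f x * f' x)) x :=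
    fun x hx => by simpa [mul_assoc] using (hf' x hx).fun_pow 2
  refine MonotoneOn.convexOn_of_deriv hD (hf.pow 2)
    (fun x hx => (hsq x hx).differentiableAt.differentiableWithinAt) ?_
  intro x hx y hy hxy
  rw [(hsq x hx).deriv, (hsq y hy).deriv]
  exact mul_le_mul_of_nonneg_left (hmono hx hy hxy) zero_le_two

theorem monotoneOn_div_sqrt_of_convexOn_sq {f : ℝ → ℝ} (hf0 : f 0 = 0)
    (hnonneg : ∀ s, 0 < s → 0 ≤ f s) (hconv : ConvexOn ℝ (Ici 0) (fun s => f s ^ 2)) :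
    MonotoneOn (fun s => f s / √s) (Ioi 0) := by
  have sqrt_secant_eq : ∀ s, 0 < s → √(f s ^ 2 / s) = f s / √s := fun s hs => by
    rw [Real.sqrt_div (sq_nonneg _), Real.sqrt_sq (hnonneg s hs)]
  intro r hr s hs hrs
  have hsecant : f r ^ 2 / r ≤ f s ^ 2 / s := by
    simpa [hf0] using
      hconv.secant_mono self_mem_Ici (mem_Ioi.mp hr).le (mem_Ioi.mp hs).le
        (mem_Ioi.mp hr).ne' (mem_Ioi.mp hs).ne' hrs
  simpa only [sqrt_secant_eq r hr, sqrt_secant_eq s hs] using Real.sqrt_le_sqrt hsecant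

theorem monotoneOn_div_sqrt_of_hasDerivAt_inv_sqrt {ϑ f : ℝ → ℝ} (hpos : ∀ t, 0 < ϑ t)
    (hϑ : AntitoneOn (fun t => ϑ t / t ^ 2) (Ioi 0)) (hf : ContinuousOn f (Ici 0))
    (hf0 : f 0 = 0) (hf' : ∀ s, 0 < s → HasDerivAt f (√(ϑ (f s)))⁻¹ s) :
    MonotoneOn (fun s => f s / √s) (Ioi 0) := by
  have hmono : StrictMonoOn f (Ici 0) := by
    refine strictMonoOn_of_deriv_pos (convex_Ici 0) hf fun s hs => ?_
    rw [interior_Ici] at hs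
    rw [(hf' s hs).deriv]
    exact inv_pos.mpr (Real.sqrt_pos.mpr (hpos _))
  have hfpos : MapsTo f (Ioi 0) (Ioi 0) := fun s hs => by
    simpa [hf0] using hmono self_mem_Ici (mem_Ioi.mp hs).le hs
  have hff' : MonotoneOn (fun s => f s * (√(ϑ (f s)))⁻¹) (Ioi 0) :=
    (monotoneOn_div_sqrt_of_antitoneOn_div_sq Subset.rfl (fun t _ => hpos t) hϑ).comp
      (hmono.monotoneOn.mono Ioi_subset_Ici_self) hfpos
  have hconv : ConvexOn ℝ (Ici 0) (fun s => f s ^ 2) :=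
    convexOn_sq_of_monotoneOn_mul_deriv (convex_Ici 0) hf (by simpa using hf') (by simpa using hff')
  exact monotoneOn_div_sqrt_of_convexOn_sq hf0 (fun s hs => (hfpos hs).le) hconv

theorem abs_map_eq_map_abs_of_odd_of_monotone {α β : Type*} [AddGroup α] [LinearOrder α]
    [AddGroup β] [LinearOrder β] {f : α → β} (hodd : f.Odd) (hmono : Monotone f) (x : α) :
    |f x| = f |x| := by
  rw [abs_eq_max_neg, abs_eq_max_neg, hmono.map_max, hodd x]

theorem f_lower_bound_at_infinity_general {ϑ f : ℝ → ℝ} (hpos : ∀ t, 0 < ϑ t)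
    (hϑ : AntitoneOn (fun t => ϑ t / t ^ 2) (Ioi 0)) (hfodd : f.Odd)
    (hf' : ∀ s, HasDerivAt f (√(ϑ (f s)))⁻¹ s) {s : ℝ} (hs : 1 ≤ |s|) :
    f 1 * |s| ^ ((1 : ℝ) / 2) ≤ |f s| := by
  have hs_pos : 0 < |s| := one_pos.trans_le hs
  have hmono : Monotone f :=
    monotone_of_hasDerivAt_nonneg hf' fun s => inv_nonneg.mpr (Real.sqrt_nonneg _)
  have hcont : Continuous f := continuous_iff_continuousAt.mpr fun s => (hf' s).continuousAt
  have hratio : f 1 / √1 ≤ f |s| / √|s| :=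
    monotoneOn_div_sqrt_of_hasDerivAt_inv_sqrt hpos hϑ hcont.continuousOn hfodd.map_zero
      (fun s _ => hf' s) (mem_Ioi.mpr one_pos) hs_pos hs
  rw [Real.sqrt_one, div_one, le_div_iff₀ (Real.sqrt_pos.mpr hs_pos)] at hratio
  rwa [abs_map_eq_map_abs_of_odd_of_monotone hfodd hmono, ← Real.sqrt_eq_rpow]

/-- For `|s| > 1` one has `|f(s)| ≥ f(1)·|s|^{1/2}`. -/
theorem f_lower_bound_at_infinity (ϑ f : ℝ → ℝ)
    (hϑC1 : ContDiff ℝ 1 ϑ) (hϑeven : ∀ s, ϑ (-s) = ϑ s) (hϑ1 : ∀ s, 1 ≤ ϑ s)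
    (hϑ1' : StrictAntiOn ϑ (Set.Iio 0)) (hϑ1'' : StrictMonoOn ϑ (Set.Ioi 0))
    (hϑ2 : MonotoneOn (fun s => ϑ s / s ^ 2) (Set.Iio 0))
    (hϑ2' : AntitoneOn (fun s => ϑ s / s ^ 2) (Set.Ioi 0))
    (hfodd : ∀ s, f (-s) = - f s) (hfC2 : ContDiff ℝ 2 f) (hf0 : f 0 = 0)
    (hf' : ∀ s, HasDerivAt f ((Real.sqrt (ϑ (f s)))⁻¹) s) :
    ∀ s : ℝ, 1 < |s| → f 1 * |s| ^ ((1:ℝ)/2) ≤ |f s| :=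
  fun _ hs => f_lower_bound_at_infinity_general (fun t => one_pos.trans_le (hϑ1 t)) hϑ2' hfodd hf'
    hs.le
end

section
/- For every p with 2 ≤ p ≤ 4 and every s ∈ ℝ, one has |f(s)|^p ≤ [1 + (8/α²)^{p/4}] · s². -/
/-!
The derivatives of `f` and of `f ^ 2` are `1 / √(ϑ ∘ f)` and `2 * f / √(ϑ ∘ f)`. The first is at
most `1`. The quotient `ϑ t / t ^ 2` decreases to `α ^ 2 / 2` as `|t|` grows, so
`α ^ 2 / 2 * t ^ 2 ≤ ϑ t`, which bounds the modulus of the second by `√(8 / α ^ 2)`. The mean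
value inequality turns these into `f s ^ 2 ≤ s ^ 2` and `(f s ^ 2) ^ 2 ≤ 8 / α ^ 2 * s ^ 2`, the
cases `p = 2` and `p = 4`. Geometric interpolation then gives the constant
`(8 / α ^ 2) ^ (p / 2 - 1)` for the exponents in between, and `p / 2 - 1 ≤ p / 4` since `p ≤ 4`.
-/

open Filter Set Topology

theorem rpow_le_one_add_rpow {x a b : ℝ} (hx : 0 ≤ x) (ha : 0 ≤ a) (hab : a ≤ b) :
    x ^ a ≤ 1 + x ^ b := by
  rcases le_total x 1 with hx1 | hx1
  · exact (Real.rpow_le_one hx hx1 ha).trans (le_add_of_nonneg_right (Real.rpow_nonneg hx b))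
  · exact (Real.rpow_le_rpow_of_exponent_le hx1 hab).trans (le_add_of_nonneg_left zero_le_one)

theorem rpow_le_rpow_sub_one_mul_of_sq_le_mul {u z K q : ℝ} (hu : 0 ≤ u) (hK : 0 ≤ K)
    (huz : u ≤ z) (hu2 : u ^ 2 ≤ K * z) (hq1 : 1 ≤ q) (hq2 : q ≤ 2) :
    u ^ q ≤ K ^ (q - 1) * z := by
  have hz : 0 ≤ z := hu.trans huz
  have h2q : 0 ≤ 2 - q := sub_nonneg.2 hq2
  have hq : 0 ≤ q - 1 := sub_nonneg.2 hq1
  calc u ^ q = u ^ (2 - q) * (u ^ 2) ^ (q - 1) := by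
        rw [← Real.rpow_natCast_mul hu, ← Real.rpow_add_of_nonneg hu h2q (by positivity)]
        congr 1
        push_cast
        ring
    _ ≤ z ^ (2 - q) * (K * z) ^ (q - 1) := by gcongr
    _ = K ^ (q - 1) * (z ^ (2 - q) * z ^ (q - 1)) := by
        rw [Real.mul_rpow hK hz, mul_left_comm]
    _ = K ^ (q - 1) * z := by
        rw [← Real.rpow_add_of_nonneg hz h2q hq, sub_add_sub_cancel,
          show (2 : ℝ) - 1 = 1 by norm_num, Real.rpow_one]

theorem le_of_tendsto_cocompact_of_monotoneOn_of_antitoneOn {X Y : Type*} [LinearOrder X]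
    [NoMinOrder X] [NoMaxOrder X] [TopologicalSpace X] [OrderClosedTopology X] [Preorder Y]
    [TopologicalSpace Y] [ClosedIicTopology Y] {g : X → Y} {a t : X} {L : Y}
    (hleft : MonotoneOn g (Iio a)) (hright : AntitoneOn g (Ioi a))
    (hlim : Tendsto g (cocompact X) (𝓝 L)) (ht : t ≠ a) : L ≤ g t := by
  have : Nonempty X := ⟨t⟩
  rcases ht.lt_or_gt with ht | ht
  · exact le_of_tendsto (hlim.mono_left atBot_le_cocompact) <|
      (eventually_le_atBot t).mono fun u hu => hleft (hu.trans_lt ht) ht hu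
  · exact le_of_tendsto (hlim.mono_left atTop_le_cocompact) <|
      (eventually_ge_atTop t).mono fun u hu => hright ht (ht.trans_le hu) hu

theorem mul_sq_le_of_tendsto_div_sq {ϑ : ℝ → ℝ} {L : ℝ} (h0 : 0 ≤ ϑ 0)
    (hneg : MonotoneOn (fun s => ϑ s / s ^ 2) (Iio 0))
    (hpos : AntitoneOn (fun s => ϑ s / s ^ 2) (Ioi 0))
    (hlim : Tendsto (fun s => ϑ s / s ^ 2) (cocompact ℝ) (𝓝 L)) (t : ℝ) :
    L * t ^ 2 ≤ ϑ t := by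
  rcases eq_or_ne t 0 with rfl | ht
  · simpa using h0
  · have hquot : L ≤ ϑ t / t ^ 2 :=
      le_of_tendsto_cocompact_of_monotoneOn_of_antitoneOn (g := fun s => ϑ s / s ^ 2)
        hneg hpos hlim ht
    exact (le_div_iff₀ (by positivity)).1 hquot

theorem norm_le_mul_norm_of_norm_hasDerivAt_le {𝕜 E : Type*} [RCLike 𝕜] [NormedAddCommGroup E]
    [NormedSpace 𝕜 E] {g g' : 𝕜 → E} {C : ℝ} (hg0 : g 0 = 0) (hg : ∀ x, HasDerivAt g (g' x) x)
    (hC : ∀ x, ‖g' x‖ ≤ C) (x : 𝕜) : ‖g x‖ ≤ C * ‖x‖ := by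
  simpa [hg0] using convex_univ.norm_image_sub_le_of_norm_hasDerivWithin_le
    (fun y _ => (hg y).hasDerivWithinAt) (fun y _ => hC y) (mem_univ 0) (mem_univ x)

theorem sq_le_sq_of_hasDerivAt_inv_sqrt {ϑ f : ℝ → ℝ} (hf0 : f 0 = 0)
    (hf' : ∀ s, HasDerivAt f (√(ϑ (f s)))⁻¹ s) (hϑ : ∀ t, 1 ≤ ϑ t) (s : ℝ) :
    f s ^ 2 ≤ s ^ 2 := by
  have hderiv (x : ℝ) : ‖(√(ϑ (f x)))⁻¹‖ ≤ 1 := by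
    rw [Real.norm_of_nonneg (by positivity)]
    exact inv_le_one_of_one_le₀ (Real.one_le_sqrt.2 (hϑ _))
  refine sq_le_sq.2 ?_
  simpa using norm_le_mul_norm_of_norm_hasDerivAt_le hf0 hf' hderiv s

theorem sq_sq_le_mul_sq_of_hasDerivAt_inv_sqrt {ϑ f : ℝ → ℝ} {K : ℝ} (hf0 : f 0 = 0)
    (hf' : ∀ s, HasDerivAt f (√(ϑ (f s)))⁻¹ s) (hK : 0 ≤ K)
    (hϑ : ∀ t, (2 * t) ^ 2 ≤ K * ϑ t) (s : ℝ) : (f s ^ 2) ^ 2 ≤ K * s ^ 2 := by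
  have hsq (x : ℝ) : HasDerivAt (fun y => f y ^ 2) (2 * f x * (√(ϑ (f x)))⁻¹) x := by
    simpa using (hf' x).fun_pow 2
  have hderiv (x : ℝ) : ‖2 * f x * (√(ϑ (f x)))⁻¹‖ ≤ √K := by
    rw [← div_eq_mul_inv, norm_div, Real.norm_of_nonneg (Real.sqrt_nonneg _)]
    refine div_le_of_le_mul₀ (by positivity) (by positivity) ?_
    rw [← Real.sqrt_mul hK]
    exact Real.abs_le_sqrt (hϑ _)
  have hbound : ‖f s ^ 2‖ ≤ √K * ‖s‖ :=
    norm_le_mul_norm_of_norm_hasDerivAt_le (by simp [hf0]) hsq hderiv s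
  calc (f s ^ 2) ^ 2 = ‖f s ^ 2‖ ^ 2 := (sq_abs _).symm
    _ ≤ (√K * ‖s‖) ^ 2 := by gcongr
    _ = K * s ^ 2 := by rw [mul_pow, Real.sq_sqrt hK, Real.norm_eq_abs, sq_abs]

theorem f_pow_p_bound_general {ϑ f : ℝ → ℝ} {α : ℝ} (hα : α ≠ 0) (hϑ1 : ∀ t, 1 ≤ ϑ t)
    (hϑsq : ∀ t, α ^ 2 / 2 * t ^ 2 ≤ ϑ t) (hf0 : f 0 = 0)
    (hf' : ∀ s, HasDerivAt f (√(ϑ (f s)))⁻¹ s) {p : ℝ} (hp2 : 2 ≤ p) (hp4 : p ≤ 4) (s : ℝ) :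
    |f s| ^ p ≤ (8 / α ^ 2) ^ (p / 2 - 1) * s ^ 2 := by
  have hϑK (t : ℝ) : (2 * t) ^ 2 ≤ 8 / α ^ 2 * ϑ t :=
    calc (2 * t) ^ 2 = 8 / α ^ 2 * (α ^ 2 / 2 * t ^ 2) := by field_simp; ring
      _ ≤ 8 / α ^ 2 * ϑ t := by gcongr; exact hϑsq t
  calc |f s| ^ p = (f s ^ 2) ^ (p / 2) := by
        rw [← sq_abs, ← Real.rpow_natCast_mul (abs_nonneg _), Nat.cast_ofNat,
          mul_div_cancel₀ _ two_ne_zero]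
    _ ≤ (8 / α ^ 2) ^ (p / 2 - 1) * s ^ 2 :=
        rpow_le_rpow_sub_one_mul_of_sq_le_mul (by positivity) (by positivity)
          (sq_le_sq_of_hasDerivAt_inv_sqrt hf0 hf' hϑ1 s)
          (sq_sq_le_mul_sq_of_hasDerivAt_inv_sqrt hf0 hf' (by positivity) hϑK s)
          (by linarith) (by linarith)

/-- For `2 ≤ p ≤ 4` and all `s`, `|f(s)|^p ≤ [1 + (8/α²)^{p/4}]·s²`. -/
theorem f_pow_p_bound (ϑ f : ℝ → ℝ) (α : ℝ) (hα : 0 < α)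
    (hϑC1 : ContDiff ℝ 1 ϑ) (hϑeven : ∀ s, ϑ (-s) = ϑ s) (hϑ1 : ∀ s, 1 ≤ ϑ s)
    (hϑ1' : StrictAntiOn ϑ (Set.Iio 0)) (hϑ1'' : StrictMonoOn ϑ (Set.Ioi 0))
    (hϑ2 : MonotoneOn (fun s => ϑ s / s ^ 2) (Set.Iio 0))
    (hϑ2' : AntitoneOn (fun s => ϑ s / s ^ 2) (Set.Ioi 0))
    (hϑ3 : Filter.Tendsto (fun s => ϑ s / s ^ 2) (Filter.cocompact ℝ) (nhds (α ^ 2 / 2)))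
    (hfodd : ∀ s, f (-s) = - f s) (hfC2 : ContDiff ℝ 2 f) (hf0 : f 0 = 0)
    (hf' : ∀ s, HasDerivAt f ((Real.sqrt (ϑ (f s)))⁻¹) s) :
    ∀ p : ℝ, 2 ≤ p → p ≤ 4 →
      ∀ s : ℝ, |f s| ^ p ≤ (1 + (8 / α ^ 2) ^ (p / 4)) * s ^ 2 := by
  intro p hp2 hp4 s
  have hϑsq : ∀ t, α ^ 2 / 2 * t ^ 2 ≤ ϑ t :=
    mul_sq_le_of_tendsto_div_sq (zero_le_one.trans (hϑ1 0)) hϑ2 hϑ2' hϑ3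
  have hconst : (8 / α ^ 2) ^ (p / 2 - 1) ≤ 1 + (8 / α ^ 2) ^ (p / 4) :=
    rpow_le_one_add_rpow (by positivity) (by linarith) (by linarith)
  exact (f_pow_p_bound_general hα.ne' hϑ1 hϑsq hf0 hf' hp2 hp4 s).trans (by gcongr)
end
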